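/- arXiv:1401.8050 — 3 statements merged into one kernel-verified Lean document; each statement's English description precedes it below -/
import Mathlib

section
/- Let m ≥ 2 and 1 ≤ k ≤ m−1, and let A and B be invertible m×m matrices over ℂ. If every k×k minor of A equals the corresponding k×k minor of B, i.e. det(A.submatrix S T) = det(B.submatrix S T) for all strictly monotone maps S, T : Fin k → Fin m, then there exists a nonzero scalar λ ∈ ℂ such that A = λ • B. -/
open Matrix

/-!
The `k × k` minors of `A` are the entries of the matrix of `⋀ᵏA`, so the hypothesis says
`⋀ᵏA = ⋀ᵏB`. By functoriality `⋀ᵏ(B⁻¹A) = ⋀ᵏ1`, hence `C = B⁻¹A` has the same `k × k` minors as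
the identity. In particular every `(k + 1) × (k + 1)` principal submatrix `M` of `C` has
adjugate `1`, and `M * adjugate M = det M • 1` forces `M` to be scalar. Since `2 ≤ k + 1`, any
two indices lie in a common principal submatrix, so `C` itself is scalar.
-/

section CompoundMatrix

open Module Set.powersetCard

variable {R : Type*} [CommRing R] {k : ℕ}

lemma toMatrix_exteriorPower_map {M N I J : Type*} [AddCommGroup M] [Module R M]
    [AddCommGroup N] [Module R N] [Fintype I] [LinearOrder I] [Finite J] [LinearOrder J]
    (b : Basis I R M) (b' : Basis J R N) (f : M →ₗ[R] N)
    (s : Set.powersetCard J k) (t : Set.powersetCard I k) :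
    LinearMap.toMatrix (b.exteriorPower k) (b'.exteriorPower k) (exteriorPower.map k f) s t =
      ((LinearMap.toMatrix b b' f).submatrix
        (ofFinEmbEquiv.symm s) (ofFinEmbEquiv.symm t)).det := by
  rw [LinearMap.toMatrix_apply, exteriorPower.basis_apply, exteriorPower.basis_repr_apply,
    exteriorPower.map_apply_ιMulti_family, exteriorPower.ιMulti_family,
    exteriorPower.ιMultiDual_apply_ιMulti, ← det_transpose]
  congr 1
  ext i j
  simp [LinearMap.toMatrix_apply]

lemma exteriorPower_map_toLin'_eq_iff {m n : Type*} [Finite m] [LinearOrder m] [Fintype n]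
    [LinearOrder n] {A B : Matrix m n R} :
    exteriorPower.map k (toLin' A) = exteriorPower.map k (toLin' B) ↔
      ∀ (S : Fin k ↪o m) (T : Fin k ↪o n), (A.submatrix S T).det = (B.submatrix S T).det := by
  rw [← (LinearMap.toMatrix ((Pi.basisFun R n).exteriorPower k)
    ((Pi.basisFun R m).exteriorPower k)).injective.eq_iff, ← Matrix.ext_iff,
    ← ofFinEmbEquiv.forall_congr_right]
  refine forall_congr' fun S => ?_
  rw [← ofFinEmbEquiv.forall_congr_right]
  simp only [toMatrix_exteriorPower_map, Equiv.symm_apply_apply,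
    ← toLin_eq_toLin', LinearMap.toMatrix_toLin]

lemma det_submatrix_mul_left_congr {l m n : Type*} [Finite l] [LinearOrder l] [Fintype m]
    [LinearOrder m] [Finite n] [LinearOrder n] {A B : Matrix m n R} (P : Matrix l m R)
    (h : ∀ (S : Fin k ↪o m) (T : Fin k ↪o n), (A.submatrix S T).det = (B.submatrix S T).det)
    (S : Fin k ↪o l) (T : Fin k ↪o n) :
    ((P * A).submatrix S T).det = ((P * B).submatrix S T).det := by
  cases nonempty_fintype n
  revert S T
  rw [← exteriorPower_map_toLin'_eq_iff, toLin'_mul, toLin'_mul, exteriorPower.map_comp,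
    exteriorPower.map_comp, exteriorPower_map_toLin'_eq_iff.2 h]

end CompoundMatrix

section MinorsOfOne

variable {R : Type*} [CommRing R] {k : ℕ}

lemma adjugate_eq_of_det_submatrix_succAbove_eq {M N : Matrix (Fin (k + 1)) (Fin (k + 1)) R}
    (h : ∀ i j : Fin (k + 1), (M.submatrix i.succAbove j.succAbove).det =
      (N.submatrix i.succAbove j.succAbove).det) :
    M.adjugate = N.adjugate := by
  ext i j
  rw [adjugate_fin_succ_eq_det_submatrix, adjugate_fin_succ_eq_det_submatrix, h]

lemma eq_det_smul_one_of_adjugate_eq_one {n : Type*} [Fintype n] [DecidableEq n]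
    {M : Matrix n n R} (h : M.adjugate = 1) : M = M.det • 1 := by
  simpa only [h, mul_one] using mul_adjugate M

lemma exists_orderEmbedding_mem_range {ι : Type*} [Fintype ι] [LinearOrder ι] (hk : k ≠ 0)
    (hkι : k < Fintype.card ι) (i j : ι) :
    ∃ T : Fin (k + 1) ↪o ι, i ∈ Set.range T ∧ j ∈ Set.range T := by
  have hpair : ({i, j} : Finset ι).card ≤ k + 1 := Finset.card_le_two.trans (by omega)
  obtain ⟨s, hs, hcard⟩ := Finset.exists_superset_card_eq hpair hkι
  refine ⟨s.orderEmbOfFin hcard, ?_⟩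
  simpa only [Finset.range_orderEmbOfFin, Finset.mem_coe, Finset.insert_subset_iff,
    Finset.singleton_subset_iff] using hs

variable {ι : Type*} [LinearOrder ι] {C : Matrix ι ι R}

lemma submatrix_eq_det_smul_one_of_minor_eq_minor_one
    (h : ∀ S T : Fin k ↪o ι, (C.submatrix S T).det = ((1 : Matrix ι ι R).submatrix S T).det)
    (T : Fin (k + 1) ↪o ι) : C.submatrix T T = (C.submatrix T T).det • 1 := by
  apply eq_det_smul_one_of_adjugate_eq_one
  calc (C.submatrix T T).adjugate
      = ((1 : Matrix ι ι R).submatrix T T).adjugate :=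
        adjugate_eq_of_det_submatrix_succAbove_eq fun i j =>
          h (i.succAboveOrderEmb.trans T) (j.succAboveOrderEmb.trans T)
    _ = 1 := by rw [submatrix_one _ T.injective, adjugate_one]

variable [Fintype ι]

lemma exists_eq_smul_one_of_minor_eq_minor_one (hk : k ≠ 0) (hkι : k < Fintype.card ι)
    (h : ∀ S T : Fin k ↪o ι, (C.submatrix S T).det = ((1 : Matrix ι ι R).submatrix S T).det) :
    ∃ c : R, C = c • 1 := by
  have hpair (i j : ι) : (i ≠ j → C i j = 0) ∧ C i i = C j j := by
    obtain ⟨T, ⟨a, rfl⟩, ⟨b, rfl⟩⟩ := exists_orderEmbedding_mem_range hk hkι i j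
    have hentry (p q) : C (T p) (T q) = ((C.submatrix T T).det • (1 : Matrix _ _ R)) p q :=
      congr_fun₂ (submatrix_eq_det_smul_one_of_minor_eq_minor_one h T) p q
    refine ⟨fun hab => ?_, ?_⟩
    · rw [hentry, Matrix.smul_apply, one_apply_ne (ne_of_apply_ne T hab), smul_zero]
    · simp only [hentry, Matrix.smul_apply, one_apply_eq]
  obtain ⟨o⟩ : Nonempty ι := Fintype.card_pos_iff.1 (Nat.zero_lt_of_lt hkι)
  refine ⟨C o o, ?_⟩
  ext i j
  obtain rfl | hij := eq_or_ne i j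
  · simpa using (hpair i o).2
  · simpa [hij] using (hpair i j).1 hij

lemma pow_eq_one_of_minor_smul_one_eq_minor_one {c : R} (hkι : k ≤ Fintype.card ι)
    (h : ∀ S T : Fin k ↪o ι, ((c • (1 : Matrix ι ι R)).submatrix S T).det =
      ((1 : Matrix ι ι R).submatrix S T).det) : c ^ k = 1 := by
  let S : Fin k ↪o ι := Finset.univ.orderEmbOfCardLe hkι
  simpa [submatrix_smul, submatrix_one _ S.injective] using h S S

end MinorsOfOne

theorem eq_smul_of_forall_minor_eq_general {R ι : Type*} [CommRing R] [Fintype ι] [LinearOrder ι]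
    {k : ℕ} (hk : k ≠ 0) (hkι : k < Fintype.card ι) {A B : Matrix ι ι R} (hB : IsUnit B.det)
    (h : ∀ S T : Fin k → ι, StrictMono S → StrictMono T →
      (A.submatrix S T).det = (B.submatrix S T).det) :
    ∃ c : R, c ^ k = 1 ∧ A = c • B := by
  have hminor (S T : Fin k ↪o ι) :
      ((B⁻¹ * A).submatrix S T).det = ((1 : Matrix ι ι R).submatrix S T).det := by
    rw [← nonsing_inv_mul B hB]
    exact det_submatrix_mul_left_congr B⁻¹ (fun S T => h S T S.strictMono T.strictMono) S T
  obtain ⟨c, hc⟩ := exists_eq_smul_one_of_minor_eq_minor_one hk hkι hminor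
  refine ⟨c, pow_eq_one_of_minor_smul_one_eq_minor_one hkι.le (hc ▸ hminor), ?_⟩
  calc A = B * (B⁻¹ * A) := (mul_nonsing_inv_cancel_left B A hB).symm
    _ = c • B := by rw [hc, mul_smul_comm, mul_one]

/-- If two invertible `m × m` complex matrices (`m ≥ 2`) have all equal
`k × k` minors for some `1 ≤ k ≤ m - 1`, then they agree up to a nonzero
scalar. -/
theorem eq_smul_of_forall_minor_eq (m k : ℕ) (hm : 2 ≤ m)
    (hk1 : 1 ≤ k) (hkm : k ≤ m - 1)
    (A B : Matrix (Fin m) (Fin m) ℂ)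
    (hA : IsUnit A.det) (hB : IsUnit B.det)
    (h : ∀ S T : Fin k → Fin m, StrictMono S → StrictMono T →
      (A.submatrix S T).det = (B.submatrix S T).det) :
    ∃ c : ℂ, c ≠ 0 ∧ A = c • B := by
  have hk : k ≠ 0 := by omega
  have hcard : k < Fintype.card (Fin m) := by rw [Fintype.card_fin]; omega
  obtain ⟨c, hck, hAB⟩ := eq_smul_of_forall_minor_eq_general hk hcard hB h
  exact ⟨c, (IsUnit.of_pow_eq_one hck hk).ne_zero, hAB⟩
end

section
/- Let Q and Q' be invertible symmetric 4×4 matrices over ℂ. Suppose that for all a, b ∈ ℂ⁴, one has (aᵀQb)² = (aᵀQa)(bᵀQb) if and only if (aᵀQ'b)² = (aᵀQ'a)(bᵀQ'b). Then there exists a nonzero scalar λ ∈ ℂ such that Q' = λ • Q. -/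
open Matrix

/-!
Let `a` be a point of the first quadric. The lines through `a` tangent to it sweep out the polar
hyperplane of `a`, so this hyperplane lies in the cone of lines through `a` tangent to the second
quadric. If `a` were not on the second quadric, that cone would have rank one less than the second
quadric, hence at least three, whereas a quadratic form vanishing on a hyperplane has rank at most
two. So the second quadric contains the first. On a general line through a fixed point off the
first quadric, both forms then vanish at the same two distinct points, which makes them
proportional.
-/

open LinearMap (BilinForm)

section RankOfLinearMaps

variable {K V W : Type*} [Field K] [AddCommGroup V] [Module K V] [AddCommGroup W] [Module K W]

theorem rank_le_one_of_forall_mem_span_singleton {f : V →ₗ[K] W} {w : W}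
    (h : ∀ x, f x ∈ Submodule.span K {w}) : f.rank ≤ 1 :=
  calc f.rank ≤ Module.rank K (Submodule.span K {w}) :=
        Submodule.rank_mono (LinearMap.range_le_iff_comap.2 (eq_top_iff.2 fun x _ => h x))
    _ ≤ 1 := by simpa using rank_span_le (R := K) {w}

theorem rank_smulRight_le_one (l : V →ₗ[K] K) (w : W) : (l.smulRight w).rank ≤ 1 :=
  rank_le_one_of_forall_mem_span_singleton fun x =>
    Submodule.smul_mem _ (l x) (Submodule.mem_span_singleton_self w)

theorem rank_le_rank_sub_smulRight_add_one (f : V →ₗ[K] W) (l : V →ₗ[K] K) (w : W) :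
    f.rank ≤ (f - l.smulRight w).rank + 1 :=
  calc f.rank = (f - l.smulRight w + l.smulRight w).rank := by rw [sub_add_cancel]
    _ ≤ (f - l.smulRight w).rank + (l.smulRight w).rank := LinearMap.rank_add_le _ _
    _ ≤ (f - l.smulRight w).rank + 1 := by gcongr; exact rank_smulRight_le_one l w

theorem mem_span_singleton_of_ker_le_ker {l m : V →ₗ[K] K}
    (h : LinearMap.ker l ≤ LinearMap.ker m) : m ∈ Submodule.span K {l} := by
  simpa using mem_span_of_iInf_ker_le_ker (L := fun _ : Unit => l) (by simpa using h)

end RankOfLinearMaps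

section Tangency

variable {R M : Type*} [CommRing R] [AddCommGroup M] [Module R M] {B : BilinForm R M}

/-- The line through `a` and `b` is tangent to the quadric `B x x = 0`: the discriminant of the
restriction of `B` to it vanishes. Linearly dependent `a` and `b` always satisfy this. -/
def IsTangent (B : BilinForm R M) (a b : M) : Prop :=
  B a b ^ 2 = B a a * B b b

/-- The bilinear form of the cone swept out by the lines through `a` tangent to the quadric
`B x x = 0`. -/
def tangentCone (B : BilinForm R M) (a : M) : BilinForm R M :=
  B a a • B - (B a).smulRight (B a)

theorem tangentCone_apply (B : BilinForm R M) (a x y : M) :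
    tangentCone B a x y = B a a * B x y - B a x * B a y := by
  simp [tangentCone]

theorem isTangent_iff_tangentCone_apply_self_eq_zero {a b : M} :
    IsTangent B a b ↔ tangentCone B a b b = 0 := by
  rw [IsTangent, tangentCone_apply, sub_eq_zero, sq, eq_comm]

theorem isSymm_tangentCone (hB : B.IsSymm) (a : M) : (tangentCone B a).IsSymm :=
  ⟨fun x y => by rw [tangentCone_apply, tangentCone_apply, hB.eq x y, mul_comm (B a x)]⟩

/-- The two values `±s` give the points where the line through `v` and `w` meets the quadric. -/
theorem apply_self_smul_add_sub_smul_eq_zero (hB : B.IsSymm) {v w : M} {s : R}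
    (hs : s ^ 2 = B v w ^ 2 - B v v * B w w) :
    B (B v v • w + (s - B v w) • v) (B v v • w + (s - B v w) • v) = 0 := by
  simp only [map_add, map_smul, LinearMap.add_apply, LinearMap.smul_apply, smul_eq_mul, hB.eq w v]
  linear_combination B v v * hs

end Tangency

section TangentCone

variable {K V : Type*} [Field K] [AddCommGroup V] [Module K V] {B B' C : BilinForm K V}
  {a v w : V}

theorem rank_le_rank_tangentCone_add_one (ha : B a a ≠ 0) :
    B.rank ≤ (tangentCone B a).rank + 1 :=
  calc B.rank = (B a a • B).rank := by
        rw [LinearMap.rank, LinearMap.rank, LinearMap.range_smul _ _ ha]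
    _ ≤ (tangentCone B a).rank + 1 := rank_le_rank_sub_smulRight_add_one _ _ _

variable [NeZero (2 : K)]

theorem rank_le_two_of_apply_self_eq_zero_on_ker (hC : C.IsSymm) {l : V →ₗ[K] K}
    (h : ∀ x, l x = 0 → C x x = 0) : C.rank ≤ 2 := by
  have hker : ∀ x y, l x = 0 → l y = 0 → C x y = 0 := fun x y hx hy => by
    rw [hC.polarization, h _ (by rw [map_add, hx, hy, add_zero]), h x hx, h y hy]
    simp
  obtain ⟨u, hu⟩ : ∃ u, ∀ x, l (x - l x • u) = 0 := by
    by_cases hl : l = 0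
    · exact ⟨0, by simp [hl]⟩
    · obtain ⟨u, hu⟩ := LinearMap.surjective hl 1
      exact ⟨u, by simp [hu]⟩
  have hrem : (C - l.smulRight (C u)).rank ≤ 1 := by
    refine rank_le_one_of_forall_mem_span_singleton (w := l) fun x => ?_
    refine mem_span_singleton_of_ker_le_ker fun y hy => ?_
    simpa using hker _ y (hu x) hy
  calc C.rank ≤ (C - l.smulRight (C u)).rank + 1 := rank_le_rank_sub_smulRight_add_one _ _ _
    _ ≤ 1 + 1 := by gcongr
    _ = 2 := one_add_one_eq_two

theorem rank_le_three_of_isTangent_on_ker (hB : B.IsSymm) (ha : B a a ≠ 0) {l : V →ₗ[K] K}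
    (h : ∀ b, l b = 0 → IsTangent B a b) : B.rank ≤ 3 :=
  calc B.rank ≤ (tangentCone B a).rank + 1 := rank_le_rank_tangentCone_add_one ha
    _ ≤ 2 + 1 := by
        gcongr
        exact rank_le_two_of_apply_self_eq_zero_on_ker (isSymm_tangentCone hB a) fun b hb =>
          isTangent_iff_tangentCone_apply_self_eq_zero.1 (h b hb)
    _ = 3 := by norm_num

theorem apply_self_eq_zero_of_isTangent_imp (hB' : B'.IsSymm) (hrank : 3 < B'.rank)
    (h : ∀ b, IsTangent B a b → IsTangent B' a b) (ha : B a a = 0) : B' a a = 0 := by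
  by_contra ha'
  refine hrank.not_ge (rank_le_three_of_isTangent_on_ker hB' ha' (l := B a) fun b hb => h b ?_)
  rw [IsTangent, hb, ha, zero_mul, zero_pow two_ne_zero]

/-- The parallelogram law for the discriminant. -/
theorem not_isTangent_add_or_sub (hw : ¬ IsTangent B v w) {x : V} (hx : IsTangent B v x) :
    ¬ IsTangent B v (x + w) ∨ ¬ IsTangent B v (x - w) := by
  by_contra! ⟨hadd, hsub⟩
  simp only [isTangent_iff_tangentCone_apply_self_eq_zero, map_add, map_sub, LinearMap.add_apply,
    LinearMap.sub_apply] at hw hx hadd hsub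
  refine hw (mul_left_cancel₀ (two_ne_zero (α := K)) ?_)
  linear_combination hadd + hsub - 2 * hx

end TangentCone

section Isotropic

variable {K V : Type*} [Field K] [NeZero (2 : K)] [IsAlgClosed K] [AddCommGroup V] [Module K V]
  {B B' C : BilinForm K V} {v w : V}

theorem apply_eq_zero_of_not_isTangent (hB : B.IsSymm) (hC : C.IsSymm) (hv : B v v ≠ 0)
    (hCv : C v v = 0) (h : ∀ x, B x x = 0 → C x x = 0) (hw : ¬ IsTangent B v w) : C v w = 0 := by
  obtain ⟨s, hs⟩ := IsAlgClosed.exists_pow_nat_eq (B v w ^ 2 - B v v * B w w) two_pos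
  have hs0 : s ≠ 0 := by
    rintro rfl
    rw [zero_pow two_ne_zero, eq_comm, sub_eq_zero] at hs
    exact hw hs
  have hpos := h _ (apply_self_smul_add_sub_smul_eq_zero hB hs)
  have hneg := h _ (apply_self_smul_add_sub_smul_eq_zero hB ((neg_sq s).trans hs))
  simp only [map_add, map_smul, LinearMap.add_apply, LinearMap.smul_apply, smul_eq_mul, hC.eq w v,
    hCv] at hpos hneg
  have hprod : (2 * 2 * s * B v v) * C v w = 0 := by linear_combination hpos - hneg
  have h2 : (2 : K) ≠ 0 := two_ne_zero
  exact (mul_eq_zero.1 hprod).resolve_left (by simp [h2, hs0, hv])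

theorem apply_eq_zero_of_isotropic_imp (hB : B.IsSymm) (hC : C.IsSymm) (hv : B v v ≠ 0)
    (hw : ¬ IsTangent B v w) (hCv : C v v = 0) (h : ∀ x, B x x = 0 → C x x = 0) : C v = 0 := by
  have hsecant {y : V} : ¬ IsTangent B v y → C v y = 0 :=
    apply_eq_zero_of_not_isTangent hB hC hv hCv h
  ext x
  by_cases hx : IsTangent B v x
  · rcases not_isTangent_add_or_sub hw hx with hadd | hsub
    · simpa [hsecant hw] using hsecant hadd
    · simpa [hsecant hw] using hsecant hsub
  · exact hsecant hx

theorem eq_zero_of_isotropic_imp (hB : B.IsSymm) (hC : C.IsSymm) (hv : B v v ≠ 0)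
    (hw : ¬ IsTangent B v w) (hCv : C v v = 0) (h : ∀ x, B x x = 0 → C x x = 0) : C = 0 := by
  have hpolar : C v = 0 := apply_eq_zero_of_isotropic_imp hB hC hv hw hCv h
  refine LinearMap.BilinForm.ext_of_isSymm hC LinearMap.BilinForm.isSymm_zero fun x => ?_
  obtain ⟨s, hs⟩ := IsAlgClosed.exists_pow_nat_eq (B v x ^ 2 - B v v * B x x) two_pos
  have hiso := h _ (apply_self_smul_add_sub_smul_eq_zero hB hs)
  simpa [hC.eq x v, hpolar, hv] using hiso

theorem eq_smul_of_isotropic_imp (hB : B.IsSymm) (hB' : B'.IsSymm) (hv : B v v ≠ 0)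
    (hw : ¬ IsTangent B v w) (h : ∀ x, B x x = 0 → B' x x = 0) :
    B' = (B' v v / B v v) • B := by
  refine sub_eq_zero.1 (eq_zero_of_isotropic_imp hB (hB'.sub (hB.smul _)) hv hw ?_ fun x hx => ?_)
  · simp [hv]
  · simp [hx, h x hx]

end Isotropic

theorem rank_toBilin'_of_isUnit_det {K n : Type*} [Field K] [Fintype n] [DecidableEq n]
    {Q : Matrix n n K} (hQ : IsUnit Q.det) : Q.toBilin'.rank = Fintype.card n := by
  have hnondeg := LinearMap.BilinForm.nondegenerate_toBilin'_of_det_ne_zero' Q hQ.ne_zero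
  have h := lift_rank_range_of_injective _ (LinearMap.ker_eq_bot.1 hnondeg.ker_eq_bot)
  simpa [LinearMap.rank] using h

theorem eq_smul_of_same_tangent_lines_general {K V : Type*} [Field K] [NeZero (2 : K)]
    [IsAlgClosed K] [AddCommGroup V] [Module K V] {B B' : BilinForm K V} (hB : B.IsSymm)
    (hB' : B'.IsSymm) (hrank : 3 < B'.rank)
    (h : ∀ a b, IsTangent B a b → IsTangent B' a b) :
    ∃ c : K, c ≠ 0 ∧ B' = c • B := by
  have hiso : ∀ x, B x x = 0 → B' x x = 0 := fun x =>
    apply_self_eq_zero_of_isTangent_imp hB' hrank (h x)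
  obtain ⟨v, hv'⟩ : ∃ v, B' v v ≠ 0 := by
    by_contra! hzero
    have hB'0 : B' = 0 :=
      LinearMap.BilinForm.ext_of_isSymm hB' LinearMap.BilinForm.isSymm_zero hzero
    simp [hB'0, LinearMap.rank_zero] at hrank
  have hv : B v v ≠ 0 := mt (hiso v) hv'
  obtain ⟨w, hw⟩ : ∃ w, ¬ IsTangent B v w := by
    by_contra! htangent
    exact hrank.not_ge
      (rank_le_three_of_isTangent_on_ker hB' hv' (l := 0) fun b _ => h v b (htangent b))
  exact ⟨B' v v / B v v, div_ne_zero hv' hv, eq_smul_of_isotropic_imp hB hB' hv hw hiso⟩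

/-- Two invertible symmetric `4 × 4` complex matrices with the same tangent-line
complex (the same set of tangent lines, expressed by the discriminant condition
`(aᵀQb)² = (aᵀQa)(bᵀQb)`) agree up to a nonzero scalar. -/
theorem eq_smul_of_same_tangent_lines (Q Q' : Matrix (Fin 4) (Fin 4) ℂ)
    (hQ : Q.IsSymm) (hQ' : Q'.IsSymm)
    (hQu : IsUnit Q.det) (hQ'u : IsUnit Q'.det)
    (h : ∀ a b : Fin 4 → ℂ,
      (a ⬝ᵥ (Q *ᵥ b)) ^ 2 = (a ⬝ᵥ (Q *ᵥ a)) * (b ⬝ᵥ (Q *ᵥ b)) ↔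
      (a ⬝ᵥ (Q' *ᵥ b)) ^ 2 = (a ⬝ᵥ (Q' *ᵥ a)) * (b ⬝ᵥ (Q' *ᵥ b))) :
    ∃ c : ℂ, c ≠ 0 ∧ Q' = c • Q := by
  obtain ⟨c, hc, hQQ'⟩ := eq_smul_of_same_tangent_lines_general
    (isSymm_toBilin'_iff_isSymm.2 hQ) (isSymm_toBilin'_iff_isSymm.2 hQ')
    (by rw [rank_toBilin'_of_isUnit_det hQ'u, Fintype.card_fin]; norm_num)
    (fun a b => by simpa only [IsTangent, toBilin'_apply'] using (h a b).1)
  exact ⟨c, hc, toBilin'.injective (by rw [hQQ', map_smul])⟩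
end

section
/- Let Q and Q' be invertible symmetric 4×4 matrices over ℂ. Suppose that for every 2-dimensional linear subspace W ⊆ ℂ⁴, one has (yᵀQy = 0 for all y ∈ W) if and only if (yᵀQ'y = 0 for all y ∈ W). Then there exists a nonzero scalar λ ∈ ℂ such that Q' = λ • Q. -/
open Matrix

/-!
Over an algebraically closed field, an isotropic subspace `U` of a quadratic form `Q` on `V` with
`dim V - 2 dim U ≥ 2` can be enlarged: a complement of `U` meets the orthogonal of `U` in dimension
at least `2`, hence contains a nonzero isotropic vector orthogonal to `U`. So as soon as
`2 d ≤ dim V` and `1 ≤ d`, every zero of `Q` lies on a `d`-dimensional isotropic subspace, and the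
family of these subspaces determines the zero set of `Q`.

The zero set in turn determines `Q`. Choose a hyperbolic pair `u, w` and let `x` be orthogonal to
both. For every scalar `s` the vector `-Q x • u + s ^ 2 • w + s • x` is isotropic. If `Q'` vanishes
at all of them, comparing the coefficients of `s ^ 2` and `s ^ 3` gives
`Q' x = polar Q' u w * Q x` and shows that `x` is orthogonal to `w`, and by symmetry to `u`, for
`Q'` as well.
-/

open Module QuadraticMap

section TotallyIsotropic

variable {K V : Type*} [Field K] [AddCommGroup V] [Module K V] {Q : QuadraticForm K V}
  {U : Submodule K V}

/-- A subspace on which the quadratic form `Q` vanishes identically; projectively, a linear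
subspace contained in the quadric `Q = 0`. -/
def IsTotallyIsotropic (Q : QuadraticForm K V) (U : Submodule K V) : Prop :=
  ∀ y ∈ U, Q y = 0

theorem isTotallyIsotropic_bot (Q : QuadraticForm K V) : IsTotallyIsotropic Q ⊥ := by
  simp [IsTotallyIsotropic]

namespace IsTotallyIsotropic

theorem sup_span_singleton (hU : IsTotallyIsotropic Q U) {y : V} (hy : Q y = 0)
    (hyU : y ∈ LinearMap.BilinForm.orthogonal Q.polarBilin U) :
    IsTotallyIsotropic Q (U ⊔ K ∙ y) := by
  intro z hz
  obtain ⟨x, hx, _, hay, rfl⟩ := Submodule.mem_sup.1 hz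
  obtain ⟨a, rfl⟩ := Submodule.mem_span_singleton.1 hay
  have hxy : polar Q x y = 0 := hyU x hx
  rw [QuadraticMap.map_add Q, polar_smul_right, QuadraticMap.map_smul, hU x hx, hy, hxy]
  simp

end IsTotallyIsotropic

theorem not_anisotropic_of_one_lt_finrank [IsAlgClosed K] (Q : QuadraticForm K V)
    (hV : 1 < finrank K V) : ¬ Q.Anisotropic := by
  intro hQ
  have : Nontrivial V := nontrivial_of_finrank_pos (zero_lt_one.trans hV)
  obtain ⟨x, hx⟩ := exists_ne (0 : V)
  obtain ⟨y, hxy⟩ := exists_linearIndependent_pair_of_one_lt_finrank hV hx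
  have hQx : Q x ≠ 0 := mt (hQ x) hx
  obtain ⟨t, ht⟩ := IsAlgClosed.exists_root
    (.C (Q x) * .X ^ 2 + .C (polar Q x y) * .X + .C (Q y))
    (by simp [Polynomial.degree_quadratic hQx])
  have hzero : Q (t • x + y) = 0 := by
    rw [QuadraticMap.map_add Q, QuadraticMap.map_smul, polar_smul_left]
    simp only [Polynomial.IsRoot.def, Polynomial.eval_add, Polynomial.eval_mul, Polynomial.eval_C,
      Polynomial.eval_pow, Polynomial.eval_X] at ht
    linear_combination ht
  exact one_ne_zero
    (LinearIndependent.pair_iff.1 hxy t 1 (by simpa using hQ _ hzero)).2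

theorem exists_mem_ne_zero_and_apply_eq_zero [IsAlgClosed K] (Q : QuadraticForm K V)
    {C : Submodule K V} (hC : 1 < finrank K C) : ∃ y ∈ C, y ≠ 0 ∧ Q y = 0 := by
  obtain ⟨y, hy, hQy⟩ := (not_anisotropic_iff_exists _).1
    (not_anisotropic_of_one_lt_finrank (Q.comp C.subtype) hC)
  exact ⟨y, y.2, by simpa using hy, hQy⟩

theorem finrank_le_finrank_add_finrank_orthogonal [FiniteDimensional K V]
    (B : LinearMap.BilinForm K V) (U : Submodule K V) :
    finrank K V ≤ finrank K U + finrank K (B.orthogonal U) :=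
  (Nat.le_add_right _ _).trans (LinearMap.BilinForm.finrank_add_finrank_orthogonal' U).ge

namespace IsTotallyIsotropic

variable [IsAlgClosed K] [FiniteDimensional K V]

theorem exists_le_finrank_eq_succ (hU : IsTotallyIsotropic Q U)
    (hUV : 2 * (finrank K U + 1) ≤ finrank K V) :
    ∃ W, U ≤ W ∧ finrank K W = finrank K U + 1 ∧ IsTotallyIsotropic Q W := by
  set P := LinearMap.BilinForm.orthogonal Q.polarBilin U
  obtain ⟨C, hUC⟩ := U.exists_isCompl
  have hdim : 1 < finrank K ↥(C ⊓ P) := by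
    have hP : finrank K V ≤ finrank K U + finrank K P :=
      finrank_le_finrank_add_finrank_orthogonal _ U
    have hC := Submodule.finrank_add_eq_of_isCompl hUC
    have hCP := Submodule.finrank_sup_add_finrank_inf_eq C P
    have hle := (C ⊔ P).finrank_le
    lia
  obtain ⟨y, ⟨hyC, hyP⟩, hy, hQy⟩ := exists_mem_ne_zero_and_apply_eq_zero Q hdim
  have hyU : y ∉ U := fun hyU ↦ hy (Submodule.disjoint_def.1 hUC.disjoint y hyU hyC)
  exact ⟨U ⊔ K ∙ y, le_sup_left, Submodule.finrank_sup_span_singleton hyU,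
    hU.sup_span_singleton hQy hyP⟩

theorem exists_le_finrank_eq (hU : IsTotallyIsotropic Q U) {d : ℕ} (hUd : finrank K U ≤ d)
    (hd : 2 * d ≤ finrank K V) :
    ∃ W, U ≤ W ∧ finrank K W = d ∧ IsTotallyIsotropic Q W := by
  induction d, hUd using Nat.le_induction with
  | base => exact ⟨U, le_rfl, rfl, hU⟩
  | succ d _ ih =>
    obtain ⟨W, hUW, rfl, hW⟩ := ih (by lia)
    obtain ⟨W', hWW', hdim, hW'⟩ := hW.exists_le_finrank_eq_succ hd
    exact ⟨W', hUW.trans hWW', hdim, hW'⟩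

end IsTotallyIsotropic

theorem exists_isTotallyIsotropic_mem [IsAlgClosed K] [FiniteDimensional K V] {x : V}
    (hx : Q x = 0) {d : ℕ} (hd₀ : 1 ≤ d) (hd : 2 * d ≤ finrank K V) :
    ∃ W : Submodule K V, x ∈ W ∧ finrank K W = d ∧ IsTotallyIsotropic Q W := by
  have hspan : IsTotallyIsotropic Q (K ∙ x) := by
    simpa using (isTotallyIsotropic_bot Q).sup_span_singleton hx (by simp)
  obtain ⟨W, hxW, hW⟩ := hspan.exists_le_finrank_eq
    ((finrank_span_le_card {x}).trans (by simpa using hd₀)) hd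
  exact ⟨W, hxW (Submodule.mem_span_singleton_self x), hW⟩

end TotallyIsotropic

section HyperbolicPair

variable {K V : Type*} [Field K] [AddCommGroup V] [Module K V] {Q Q' : QuadraticForm K V}
  {u w : V}

/-- Two isotropic vectors with polar product `1`, so that `Q (a • u + b • w) = a * b`: a standard
basis of a hyperbolic plane. -/
structure IsHyperbolicPair (Q : QuadraticForm K V) (u w : V) : Prop where
  isotropic_left : Q u = 0
  isotropic_right : Q w = 0
  polar_eq_one : polar Q u w = 1

theorem exists_isHyperbolicPair (hu : Q u = 0) (hrad : u ∉ Q.radical) :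
    ∃ w, IsHyperbolicPair Q u w := by
  obtain ⟨x, hx⟩ : ∃ x, polar Q u x ≠ 0 := by
    by_contra! h
    exact hrad ⟨hu, LinearMap.ext h⟩
  obtain ⟨v, huv⟩ : ∃ v, polar Q u v = 1 := ⟨(polar Q u x)⁻¹ • x, by simp [hx]⟩
  refine ⟨v + -Q v • u, hu, ?_, ?_⟩
  · rw [QuadraticMap.map_add Q, QuadraticMap.map_smul, polar_smul_right, polar_comm Q v u, huv, hu]
    simp
  · rw [polar_add_right, polar_smul_right, polar_self, hu, huv]
    simp

theorem exists_isHyperbolicPair_of_one_lt_finrank_quotient_radical [IsAlgClosed K]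
    (hQ : 1 < finrank K (V ⧸ Q.radical)) : ∃ u w, IsHyperbolicPair Q u w := by
  obtain ⟨C, hC⟩ := Q.radical.exists_isCompl
  rw [(Submodule.quotientEquivOfIsCompl _ _ hC).finrank_eq] at hQ
  obtain ⟨u, huC, hu, hQu⟩ := exists_mem_ne_zero_and_apply_eq_zero Q hQ
  exact ⟨u, exists_isHyperbolicPair hQu
    fun hrad ↦ hu (Submodule.disjoint_def.1 hC.disjoint u hrad huC)⟩

namespace IsHyperbolicPair

theorem symm (h : IsHyperbolicPair Q u w) : IsHyperbolicPair Q w u :=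
  ⟨h.isotropic_right, h.isotropic_left, (polar_comm Q w u).trans h.polar_eq_one⟩

theorem exists_eq_add (h : IsHyperbolicPair Q u w) (x : V) :
    ∃ (a b : K) (y : V), polar Q u y = 0 ∧ polar Q w y = 0 ∧ x = a • u + b • w + y := by
  refine ⟨polar Q w x, polar Q u x, x - polar Q w x • u - polar Q u x • w, ?_, ?_, by abel⟩
  · simp [polar_sub_right, h.isotropic_left, h.polar_eq_one]
  · simp [polar_sub_right, h.isotropic_right, h.symm.polar_eq_one]

end IsHyperbolicPair

theorem map_smul_add_smul_add (Q : QuadraticForm K V) (a b : K) (u w x : V) :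
    Q (a • u + b • w + x) = a ^ 2 * Q u + b ^ 2 * Q w + Q x + a * b * polar Q u w +
      a * polar Q u x + b * polar Q w x := by
  simp only [QuadraticMap.map_add Q, QuadraticMap.map_smul, polar_add_left, polar_smul_left,
    polar_smul_right, smul_eq_mul]
  ring

namespace IsHyperbolicPair

variable [Infinite K] (huw : IsHyperbolicPair Q u w) (hQQ' : ∀ x, Q x = 0 → Q' x = 0)
include huw hQQ'

theorem map_eq_mul_and_polar_eq_zero {x : V} (hux : polar Q u x = 0) (hwx : polar Q w x = 0) :
    Q' x = polar Q' u w * Q x ∧ polar Q' w x = 0 := by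
  have hQ'u := hQQ' u huw.isotropic_left
  have hQ'w := hQQ' w huw.isotropic_right
  have hpoly : (Cubic.mk (polar Q' w x) (Q' x - polar Q' u w * Q x)
      (-(Q x * polar Q' u x)) 0).toPoly = 0 := Polynomial.funext fun s ↦ by
    have hzero : Q (-Q x • u + s ^ 2 • w + s • x) = 0 := by
      rw [map_smul_add_smul_add, QuadraticMap.map_smul, polar_smul_right, polar_smul_right, hux,
        hwx, huw.isotropic_left, huw.isotropic_right, huw.polar_eq_one]
      simp only [smul_eq_mul]
      ring
    have hzero' := hQQ' _ hzero
    rw [map_smul_add_smul_add, hQ'u, hQ'w, QuadraticMap.map_smul, polar_smul_right,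
      polar_smul_right] at hzero'
    simp only [smul_eq_mul] at hzero'
    simp only [Cubic.toPoly, Polynomial.eval_add, Polynomial.eval_mul, Polynomial.eval_C,
      Polynomial.eval_pow, Polynomial.eval_X, Polynomial.eval_zero]
    linear_combination hzero'
  have hcubic := (Cubic.toPoly_eq_zero_iff _).1 hpoly
  exact ⟨sub_eq_zero.1 (congrArg Cubic.b hcubic), congrArg Cubic.a hcubic⟩

theorem eq_smul_of_forall_eq_zero : Q' = polar Q' u w • Q := by
  ext x
  obtain ⟨a, b, y, huy, hwy, rfl⟩ := huw.exists_eq_add x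
  obtain ⟨hQ'y, hwy'⟩ := huw.map_eq_mul_and_polar_eq_zero hQQ' huy hwy
  have huy' := (huw.symm.map_eq_mul_and_polar_eq_zero hQQ' hwy huy).2
  rw [_root_.smul_apply, map_smul_add_smul_add, map_smul_add_smul_add,
    hQQ' u huw.isotropic_left, hQQ' w huw.isotropic_right, hQ'y, hwy', huy',
    huw.isotropic_left, huw.isotropic_right, huw.polar_eq_one, huy, hwy, smul_eq_mul]
  ring

end IsHyperbolicPair

end HyperbolicPair

theorem exists_eq_smul_of_isTotallyIsotropic_imp {K V : Type*} [Field K] [IsAlgClosed K]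
    [AddCommGroup V] [Module K V] [FiniteDimensional K V] {Q Q' : QuadraticForm K V}
    (hQ : 1 < finrank K (V ⧸ Q.radical)) {d : ℕ} (hd₀ : 1 ≤ d) (hd : 2 * d ≤ finrank K V)
    (h : ∀ W : Submodule K V, finrank K W = d → IsTotallyIsotropic Q W → IsTotallyIsotropic Q' W) :
    ∃ c : K, Q' = c • Q := by
  obtain ⟨u, w, huw⟩ := exists_isHyperbolicPair_of_one_lt_finrank_quotient_radical hQ
  refine ⟨_, huw.eq_smul_of_forall_eq_zero fun x hx ↦ ?_⟩
  obtain ⟨W, hxW, hdim, hW⟩ := exists_isTotallyIsotropic_mem hx hd₀ hd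
  exact h W hdim hW x hxW

section Matrix

variable {n K : Type*} [Fintype n] [DecidableEq n] [Field K] {A : Matrix n n K}

theorem toQuadraticForm'_apply (A : Matrix n n K) (x : n → K) :
    A.toQuadraticForm' x = x ⬝ᵥ (A *ᵥ x) :=
  toLinearMap₂'_apply' A x x

theorem toLinearMap₂'_comm_of_isSymm (hA : A.IsSymm) (x y : n → K) :
    toLinearMap₂' K A x y = toLinearMap₂' K A y x := by
  rw [toLinearMap₂'_apply', toLinearMap₂'_apply', dotProduct_mulVec, ← mulVec_transpose, hA.eq,
    dotProduct_comm]

variable [Invertible (2 : K)]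

theorem associated_toQuadraticForm'_of_isSymm (hA : A.IsSymm) :
    QuadraticMap.associated A.toQuadraticForm' = toLinearMap₂' K A :=
  associated_left_inverse K (toLinearMap₂'_comm_of_isSymm hA)

theorem toMatrix'_toQuadraticForm'_of_isSymm (hA : A.IsSymm) :
    A.toQuadraticForm'.toMatrix' = A := by
  rw [QuadraticForm.toMatrix', associated_toQuadraticForm'_of_isSymm hA,
    LinearMap.toMatrix'_toLinearMap₂']

theorem radical_toQuadraticForm'_of_isSymm (hA : A.IsSymm) :
    A.toQuadraticForm'.radical = LinearMap.ker A.mulVecLin := by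
  ext x
  rw [radical_eq_ker_associated, associated_toQuadraticForm'_of_isSymm hA, LinearMap.mem_ker,
    LinearMap.mem_ker, LinearMap.ext_iff, mulVecLin_apply, ← dotProduct_eq_zero_iff]
  simp only [toLinearMap₂'_comm_of_isSymm hA x, toLinearMap₂'_apply', dotProduct_comm (A *ᵥ x),
    LinearMap.zero_apply]

theorem finrank_quotient_radical_toQuadraticForm'_of_isSymm (hA : A.IsSymm) :
    finrank K ((n → K) ⧸ A.toQuadraticForm'.radical) = A.rank := by
  rw [radical_toQuadraticForm'_of_isSymm hA, A.mulVecLin.quotKerEquivRange.finrank_eq, rank]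

end Matrix

theorem eq_smul_of_same_rulings_general {n K : Type*} [Fintype n] [Field K] [IsAlgClosed K]
    [Invertible (2 : K)] {A B : Matrix n n K} (hA : A.IsSymm) (hB : B.IsSymm) (hrank : 2 ≤ A.rank)
    {d : ℕ} (hd₀ : 1 ≤ d) (hd : 2 * d ≤ Fintype.card n)
    (h : ∀ W : Submodule K (n → K), finrank K W = d →
      (∀ y ∈ W, y ⬝ᵥ (A *ᵥ y) = 0) → ∀ y ∈ W, y ⬝ᵥ (B *ᵥ y) = 0) :
    ∃ c : K, B = c • A := by
  classical
  simp only [← toQuadraticForm'_apply] at h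
  rw [← finrank_quotient_radical_toQuadraticForm'_of_isSymm hA] at hrank
  obtain ⟨c, hc⟩ := exists_eq_smul_of_isTotallyIsotropic_imp hrank hd₀ (by simpa using hd) h
  refine ⟨c, ?_⟩
  rw [← toMatrix'_toQuadraticForm'_of_isSymm hB, hc, QuadraticForm.toMatrix'_smul,
    toMatrix'_toQuadraticForm'_of_isSymm hA]

/-- A smooth quadric surface is determined, up to a nonzero scalar, by the
family of lines contained in it: if two invertible symmetric `4 × 4` complex
matrices have the same `2`-dimensional totally isotropic subspaces, they agree
up to a nonzero scalar. -/
theorem eq_smul_of_same_rulings (Q Q' : Matrix (Fin 4) (Fin 4) ℂ)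
    (hQ : Q.IsSymm) (hQ' : Q'.IsSymm)
    (hQu : IsUnit Q.det) (hQ'u : IsUnit Q'.det)
    (h : ∀ W : Submodule ℂ (Fin 4 → ℂ), Module.finrank ℂ W = 2 →
      ((∀ y ∈ W, y ⬝ᵥ (Q *ᵥ y) = 0) ↔ (∀ y ∈ W, y ⬝ᵥ (Q' *ᵥ y) = 0))) :
    ∃ c : ℂ, c ≠ 0 ∧ Q' = c • Q := by
  have hrank : Q.rank = 4 := rank_of_isUnit Q ((isUnit_iff_isUnit_det Q).2 hQu)
  obtain ⟨c, rfl⟩ := eq_smul_of_same_rulings_general hQ hQ' (by lia) one_le_two (by simp)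
    fun W hW ↦ (h W hW).1
  exact ⟨c, left_ne_zero_of_smul ((isUnit_iff_isUnit_det _).2 hQ'u).ne_zero, rfl⟩
end
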